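/- arXiv:1408.2653 — 4 statements merged into one kernel-verified Lean document; each statement's English description precedes it below -/
import Mathlib

section
/- Let S be a nonempty finite set of natural numbers, M a positive integer, λ ∈ ℝ^M, and let q(x) = exp(−∑_{k=1}^M λ_k x^k)/Z(λ) with Z(λ) = ∑_{x∈S} exp(−∑_{k=1}^M λ_k x^k). If g is a probability mass function on S with ∑_{x∈S} x^k g(x) = ∑_{x∈S} x^k q(x) for all k = 1, …, M and the entropies are equal, −∑_{x∈S} g(x) ln g(x) = −∑_{x∈S} q(x) ln q(x), then g(x) = q(x) for every x ∈ S. -/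
/-- Uniqueness part of the maximum entropy principle: a probability mass function `g`
on a nonempty finite set `S ⊆ ℕ` satisfying the same moment constraints as the
exponential-family distribution `q` and having the same Shannon entropy must equal `q`
on `S`. -/
theorem maxEntropy_exponentialFamily_unique
    (S : Finset ℕ) (hS : S.Nonempty) (M : ℕ) (hM : 0 < M)
    (l : Fin M → ℝ)
    (Z : ℝ)
    (hZ : Z = ∑ x ∈ S, Real.exp (-∑ k : Fin M, l k * (x : ℝ) ^ (k.1 + 1)))
    (q : ℕ → ℝ)
    (hq : ∀ x : ℕ, q x = Real.exp (-∑ k : Fin M, l k * (x : ℝ) ^ (k.1 + 1)) / Z)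
    (g : ℕ → ℝ)
    (hg_nonneg : ∀ x ∈ S, 0 ≤ g x)
    (hg_sum : ∑ x ∈ S, g x = 1)
    (hmom : ∀ k : Fin M,
      ∑ x ∈ S, (x : ℝ) ^ (k.1 + 1) * g x = ∑ x ∈ S, (x : ℝ) ^ (k.1 + 1) * q x)
    (hent : -∑ x ∈ S, g x * Real.log (g x) = -∑ x ∈ S, q x * Real.log (q x)) :
    ∀ x ∈ S, g x = q x := by
  have hZpos : 0 < Z := by
    rw [hZ]
    exact Finset.sum_pos (fun x _ => Real.exp_pos _) hS
  have hqpos : ∀ x, 0 < q x := fun x => by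
    rw [hq]
    exact div_pos (Real.exp_pos _) hZpos
  have hqsum : ∑ x ∈ S, q x = 1 := by
    simp only [hq]
    rw [← Finset.sum_div, ← hZ, div_self hZpos.ne']
  have hlog : ∀ x, Real.log (q x)
      = -∑ k : Fin M, l k * (x : ℝ) ^ (k.1 + 1) - Real.log Z := fun x => by
    rw [hq, Real.log_div (Real.exp_pos _).ne' hZpos.ne', Real.log_exp]
  have key : ∀ f : ℕ → ℝ, ∑ x ∈ S, f x * Real.log (q x)
      = -∑ k : Fin M, l k * ∑ x ∈ S, (x : ℝ) ^ (k.1 + 1) * f x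
        - Real.log Z * ∑ x ∈ S, f x := fun f => by
    simp only [Finset.mul_sum]
    rw [Finset.sum_comm, ← Finset.sum_neg_distrib, ← Finset.sum_sub_distrib]
    refine Finset.sum_congr rfl fun x _ => ?_
    rw [hlog, mul_sub, mul_neg, Finset.mul_sum, mul_comm (f x) (Real.log Z)]
    congr 2
    exact Finset.sum_congr rfl fun k _ => by ring
  have hcross : ∑ x ∈ S, g x * Real.log (q x) = ∑ x ∈ S, q x * Real.log (q x) := by
    rw [key g, key q, hg_sum, hqsum]
    simp only [hmom]
  have hterm : ∀ x, q x * InformationTheory.klFun (g x / q x)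
      = g x * Real.log (g x) - g x * Real.log (q x) + (q x - g x) := fun x => by
    have h := (hqpos x).ne'
    rw [InformationTheory.klFun_apply]
    by_cases h0 : g x = 0
    · simp [h0]
    · rw [Real.log_div h0 h]
      field_simp
      ring
  have hnn : ∀ x ∈ S, 0 ≤ q x * InformationTheory.klFun (g x / q x) := fun x hx =>
    mul_nonneg (hqpos x).le
      (InformationTheory.klFun_nonneg (div_nonneg (hg_nonneg x hx) (hqpos x).le))
  have hsum : ∑ x ∈ S, q x * InformationTheory.klFun (g x / q x) = 0 := by
    simp only [hterm]
    rw [Finset.sum_add_distrib, Finset.sum_sub_distrib, Finset.sum_sub_distrib, hcross,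
      hg_sum, hqsum]
    linarith
  intro x hx
  have h0 := (Finset.sum_eq_zero_iff_of_nonneg hnn).1 hsum x hx
  have h1 := (mul_eq_zero.1 h0).resolve_left (hqpos x).ne'
  rw [InformationTheory.klFun_eq_zero_iff (div_nonneg (hg_nonneg x hx) (hqpos x).le)] at h1
  exact (div_eq_one_iff_eq (hqpos x).ne').1 h1
end

section
/- Let S be a finite set of natural numbers with at least M+1 elements, where M is a positive integer, and let μ_1, …, μ_M ∈ ℝ. Then the dual function Ψ(λ) = ln (∑_{x∈S} exp(−∑_{k=1}^M λ_k x^k)) + ∑_{k=1}^M λ_k μ_k is strictly convex on ℝ^M; consequently, Ψ has at most one global minimizer. -/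
open Polynomial in
theorem aux_indep (S : Finset ℕ) (M : ℕ) (hcard : M + 1 ≤ S.card) (d : Fin M → ℝ) (c : ℝ)
    (h : ∀ x ∈ S, ∑ k : Fin M, d k * (x : ℝ) ^ (k.1 + 1) = c) : ∀ k, d k = 0 := by
  have hp : (∑ k : Fin M, C (d k) * X ^ (k.1 + 1) - C c : ℝ[X]) = 0 := by
    apply Polynomial.eq_zero_of_degree_lt_of_eval_finset_eq_zero (S.map Nat.castEmbedding)
    · rw [Finset.card_map]
      refine lt_of_le_of_lt (b := (M : WithBot ℕ)) ?_ (by exact_mod_cast hcard)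
      refine (Polynomial.degree_sub_le _ _).trans (max_le ?_ ?_)
      · refine (Polynomial.degree_sum_le _ _).trans (Finset.sup_le fun k _ => ?_)
        refine (Polynomial.degree_C_mul_X_pow_le _ _).trans ?_
        exact_mod_cast k.2
      · refine Polynomial.degree_C_le.trans ?_
        exact_mod_cast Nat.zero_le M
    · intro x hx
      obtain ⟨n, hn, rfl⟩ := Finset.mem_map.1 hx
      simp [Polynomial.eval_finset_sum, h n hn]
  intro k
  have := congrArg (fun p => Polynomial.coeff p (k.1 + 1)) hp
  simpa [Polynomial.finset_sum_coeff, Polynomial.coeff_C_mul, Polynomial.coeff_X_pow,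
    Polynomial.coeff_C, Fin.val_inj] using this

theorem aux_lse (S : Finset ℕ) (hS : S.Nonempty) (u v : ℕ → ℝ) (s t : ℝ) (hs : 0 < s) (ht : 0 < t)
    (hst : s + t = 1) (huv : ¬ ∃ c, ∀ x ∈ S, v x - u x = c) :
    Real.log (∑ x ∈ S, Real.exp (s * u x + t * v x)) <
      s * Real.log (∑ x ∈ S, Real.exp (u x)) + t * Real.log (∑ x ∈ S, Real.exp (v x)) := by
  have hpos : ∀ w : ℕ → ℝ, 0 < ∑ x ∈ S, Real.exp (w x) :=
    fun w => Finset.sum_pos (fun _ _ => Real.exp_pos _) hS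
  have hnorm : ∀ w : ℕ → ℝ,
      ∑ x ∈ S, Real.exp (w x - Real.log (∑ x ∈ S, Real.exp (w x))) = 1 := by
    intro w
    simp_rw [Real.exp_sub, Real.exp_log (hpos w)]
    rw [← Finset.sum_div, div_self (hpos w).ne']
  have hA := hnorm u
  have hB := hnorm v
  set A := Real.log (∑ x ∈ S, Real.exp (u x))
  set B := Real.log (∑ x ∈ S, Real.exp (v x))
  rw [Real.log_lt_iff_lt_exp (hpos _)]
  have key : ∑ x ∈ S, Real.exp (s * (u x - A) + t * (v x - B)) < 1 := by
    have h1 : (1 : ℝ) = ∑ x ∈ S, (s * Real.exp (u x - A) + t * Real.exp (v x - B)) := by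
      rw [Finset.sum_add_distrib, ← Finset.mul_sum, ← Finset.mul_sum, hA, hB]; linarith
    rw [h1]
    apply Finset.sum_lt_sum
    · intro x _
      exact convexOn_exp.2 (Set.mem_univ _) (Set.mem_univ _) hs.le ht.le hst
    · by_contra! hc
      apply huv
      refine ⟨B - A, fun x hx => ?_⟩
      by_contra hne
      refine absurd (hc x hx) (not_le.2 ?_)
      exact strictConvexOn_exp.2 (Set.mem_univ _) (Set.mem_univ _)
        (fun h => hne (by linarith)) hs ht hst
  have h2 : ∀ x, Real.exp (s * u x + t * v x)
      = Real.exp (s * (u x - A) + t * (v x - B)) * Real.exp (s * A + t * B) := by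
    intro x; rw [← Real.exp_add]; congr 1; ring
  simp_rw [h2]
  rw [← Finset.sum_mul]
  exact mul_lt_of_lt_one_left (Real.exp_pos _) key

/-- If the finite support `S ⊆ ℕ` has at least `M + 1` elements, then the dual
function `Ψ` is strictly convex on `ℝ^M`; consequently it has at most one global
minimizer. -/
theorem dualFunction_strictConvexOn_of_card
    (S : Finset ℕ) (M : ℕ) (hM : 0 < M) (hcard : M + 1 ≤ S.card)
    (μ : Fin M → ℝ)
    (Ψ : (Fin M → ℝ) → ℝ)
    (hΨ : ∀ l : Fin M → ℝ,
      Ψ l = Real.log (∑ x ∈ S, Real.exp (-∑ k : Fin M, l k * (x : ℝ) ^ (k.1 + 1)))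
              + ∑ k : Fin M, l k * μ k) :
    StrictConvexOn ℝ Set.univ Ψ ∧
      ∀ a b : Fin M → ℝ,
        (∀ l : Fin M → ℝ, Ψ a ≤ Ψ l) → (∀ l : Fin M → ℝ, Ψ b ≤ Ψ l) → a = b := by
  have hS : S.Nonempty := Finset.card_pos.1 (by omega)
  have hlin : ∀ (a b w : Fin M → ℝ) (s t : ℝ), ∑ k, (s • a + t • b) k * w k
      = s * ∑ k, a k * w k + t * ∑ k, b k * w k := by
    intro a b w s t
    rw [Finset.mul_sum, Finset.mul_sum, ← Finset.sum_add_distrib]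
    refine Finset.sum_congr rfl fun k _ => ?_
    simp only [Pi.add_apply, Pi.smul_apply, smul_eq_mul]
    ring
  have hconv : StrictConvexOn ℝ Set.univ Ψ := by
    refine ⟨convex_univ, ?_⟩
    intro a _ b _ hab s t hs ht hst
    have h := aux_lse S hS (fun x => -∑ k : Fin M, a k * (x : ℝ) ^ (k.1 + 1))
      (fun x => -∑ k : Fin M, b k * (x : ℝ) ^ (k.1 + 1)) s t hs ht hst (by
        rintro ⟨c, hc⟩
        apply hab
        have := aux_indep S M hcard (fun k => a k - b k) c (fun x hx => by
          rw [← hc x hx]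
          simp only [sub_mul, Finset.sum_sub_distrib]
          ring)
        funext k
        linarith [this k])
    have e : ∀ x : ℕ, -∑ k : Fin M, (s • a + t • b) k * (x : ℝ) ^ (k.1 + 1)
        = s * (-∑ k : Fin M, a k * (x : ℝ) ^ (k.1 + 1))
          + t * (-∑ k : Fin M, b k * (x : ℝ) ^ (k.1 + 1)) := by
      intro x
      rw [hlin a b (fun k => (x : ℝ) ^ (k.1 + 1))]
      ring
    rw [hΨ, hΨ a, hΨ b, hlin a b μ]
    simp_rw [e]
    simp only [smul_eq_mul]
    linarith
  refine ⟨hconv, fun a b ha hb => ?_⟩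
  exact hconv.eq_of_isMinOn (fun l _ => ha l) (fun l _ => hb l) (Set.mem_univ _) (Set.mem_univ _)
end

section
/- (Strong duality.) Let S be a nonempty finite set of natural numbers, M a positive integer, and μ_1, …, μ_M ∈ ℝ. Suppose λ* ∈ ℝ^M is a global minimizer of the dual function Ψ(λ) = ln Z(λ) + ∑_{k=1}^M λ_k μ_k, where Z(λ) = ∑_{x∈S} exp(−∑_{k=1}^M λ_k x^k). Then the exponential-family distribution q_{λ*}(x) = exp(−∑_{k=1}^M λ_k* x^k)/Z(λ*) satisfies the moment constraints ∑_{x∈S} x^k q_{λ*}(x) = μ_k for k = 1, …, M, its entropy equals Ψ(λ*), and it maximizes the entropy −∑_{x∈S} g(x) ln g(x) over all probability mass functions g on S satisfying these moment constraints. -/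
/-- Strong duality: if `λ*` is a global minimizer of the dual function `Ψ`, then the
exponential-family distribution `q_{λ*}` satisfies the moment constraints, its entropy
equals `Ψ(λ*)`, and it maximizes the entropy among all probability mass functions on
`S` satisfying the moment constraints. -/
theorem maxEntropy_strong_duality
    (S : Finset ℕ) (hS : S.Nonempty) (M : ℕ) (hM : 0 < M)
    (μ : Fin M → ℝ)
    (Z : (Fin M → ℝ) → ℝ)
    (hZ : ∀ l : Fin M → ℝ,
      Z l = ∑ x ∈ S, Real.exp (-∑ k : Fin M, l k * (x : ℝ) ^ (k.1 + 1)))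
    (Ψ : (Fin M → ℝ) → ℝ)
    (hΨ : ∀ l : Fin M → ℝ, Ψ l = Real.log (Z l) + ∑ k : Fin M, l k * μ k)
    (lstar : Fin M → ℝ)
    (hmin : ∀ l : Fin M → ℝ, Ψ lstar ≤ Ψ l)
    (q : ℕ → ℝ)
    (hq : ∀ x : ℕ,
      q x = Real.exp (-∑ k : Fin M, lstar k * (x : ℝ) ^ (k.1 + 1)) / Z lstar) :
    (∀ k : Fin M, ∑ x ∈ S, (x : ℝ) ^ (k.1 + 1) * q x = μ k) ∧
      (-∑ x ∈ S, q x * Real.log (q x) = Ψ lstar) ∧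
      (∀ g : ℕ → ℝ, (∀ x ∈ S, 0 ≤ g x) → (∑ x ∈ S, g x = 1) →
        (∀ k : Fin M, ∑ x ∈ S, (x : ℝ) ^ (k.1 + 1) * g x = μ k) →
        -∑ x ∈ S, g x * Real.log (g x) ≤ -∑ x ∈ S, q x * Real.log (q x)) := by
  have hZpos : ∀ l, 0 < Z l := fun l => by
    rw [hZ]; exact Finset.sum_pos (fun x _ => Real.exp_pos _) hS
  have hqpos : ∀ x, 0 < q x := fun x => by
    rw [hq]; exact div_pos (Real.exp_pos _) (hZpos _)
  have hqsum : ∑ x ∈ S, q x = 1 := by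
    simp only [hq]
    rw [← Finset.sum_div, ← hZ, div_self (hZpos _).ne']
  have hlog : ∀ x, Real.log (q x) =
      -(∑ k : Fin M, lstar k * (x : ℝ) ^ (k.1 + 1)) - Real.log (Z lstar) := fun x => by
    rw [hq, Real.log_div (Real.exp_pos _).ne' (hZpos _).ne', Real.log_exp]
  have hmom : ∀ k : Fin M, ∑ x ∈ S, (x : ℝ) ^ (k.1 + 1) * q x = μ k := by
    intro k
    have key : ∀ (t : ℝ) (c : Fin M → ℝ),
        ∑ j, (lstar + Pi.single k t : Fin M → ℝ) j * c j = (∑ j, lstar j * c j) + t * c k := by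
      intro t c
      simp [add_mul, Finset.sum_add_distrib, Pi.single_apply]
    have hexp : ∀ t : ℝ, Ψ (lstar + Pi.single k t) =
        Real.log (∑ x ∈ S, Real.exp (-((∑ j : Fin M, lstar j * (x : ℝ) ^ (j.1 + 1))
          + t * (x : ℝ) ^ (k.1 + 1)))) + ((∑ j, lstar j * μ j) + t * μ k) := by
      intro t
      rw [hΨ, hZ, key t μ]
      congr 2
      refine Finset.sum_congr rfl fun x _ => ?_
      rw [key t (fun j => (x : ℝ) ^ (j.1 + 1))]
    have hd : HasDerivAt (fun t : ℝ => Ψ (lstar + Pi.single k t))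
        ((∑ x ∈ S, Real.exp (-(∑ j : Fin M, lstar j * (x : ℝ) ^ (j.1 + 1)))
          * (-(x : ℝ) ^ (k.1 + 1))) / Z lstar + μ k) 0 := by
      simp only [hexp]
      refine HasDerivAt.add ?_ ?_
      · have h1 : HasDerivAt (fun t : ℝ => ∑ x ∈ S,
            Real.exp (-((∑ j : Fin M, lstar j * (x : ℝ) ^ (j.1 + 1))
              + t * (x : ℝ) ^ (k.1 + 1))))
            (∑ x ∈ S, Real.exp (-(∑ j : Fin M, lstar j * (x : ℝ) ^ (j.1 + 1)))
              * (-(x : ℝ) ^ (k.1 + 1))) 0 := by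
          refine HasDerivAt.fun_sum fun x _ => ?_
          have h2 := ((((hasDerivAt_id (0:ℝ)).mul_const ((x : ℝ) ^ (k.1 + 1))).const_add
            (∑ j : Fin M, lstar j * (x : ℝ) ^ (j.1 + 1))).fun_neg).exp
          simpa using h2
        have h3 := h1.log (by
          have := hZpos lstar
          rw [hZ] at this
          simpa using this.ne')
        simpa [hZ] using h3
      · simpa using ((hasDerivAt_id (0:ℝ)).mul_const (μ k)).const_add (∑ j, lstar j * μ j)
    have hlm : IsLocalMin (fun t : ℝ => Ψ (lstar + Pi.single k t)) 0 := by
      refine Filter.Eventually.of_forall fun t => ?_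
      simpa using hmin (lstar + Pi.single k t)
    have h0 := hlm.hasDerivAt_eq_zero hd
    have h4 : ∑ x ∈ S, (x : ℝ) ^ (k.1 + 1) * q x =
        -((∑ x ∈ S, Real.exp (-(∑ j : Fin M, lstar j * (x : ℝ) ^ (j.1 + 1)))
          * (-(x : ℝ) ^ (k.1 + 1))) / Z lstar) := by
      rw [Finset.sum_div, ← Finset.sum_neg_distrib]
      refine Finset.sum_congr rfl fun x _ => ?_
      rw [hq]; ring
    linarith
  have hcross : ∀ g : ℕ → ℝ, (∑ x ∈ S, g x = 1) →
      (∀ k : Fin M, ∑ x ∈ S, (x : ℝ) ^ (k.1 + 1) * g x = μ k) →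
      -∑ x ∈ S, g x * Real.log (q x) = Ψ lstar := by
    intro g hg1 hgm
    have h5 : ∑ x ∈ S, g x * (∑ k : Fin M, lstar k * (x : ℝ) ^ (k.1 + 1))
        = ∑ k, lstar k * μ k := by
      simp only [← hgm, Finset.mul_sum]
      rw [Finset.sum_comm]
      refine Finset.sum_congr rfl fun k _ => Finset.sum_congr rfl fun x _ => ?_
      ring
    have h6 : ∑ x ∈ S, g x * Real.log (q x) =
        -(∑ x ∈ S, g x * (∑ k : Fin M, lstar k * (x : ℝ) ^ (k.1 + 1)))
          - (∑ x ∈ S, g x) * Real.log (Z lstar) := by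
      rw [Finset.sum_mul, ← Finset.sum_neg_distrib, ← Finset.sum_sub_distrib]
      refine Finset.sum_congr rfl fun x _ => ?_
      rw [hlog]; ring
    rw [h6, h5, hg1, hΨ]; ring
  refine ⟨hmom, hcross q hqsum hmom, fun g hg0 hg1 hgm => ?_⟩
  rw [hcross q hqsum hmom, ← hcross g hg1 hgm]
  have h7 : ∑ x ∈ S, (g x * Real.log (q x) - g x * Real.log (g x)) ≤ ∑ x ∈ S, (q x - g x) := by
    refine Finset.sum_le_sum fun x hx => ?_
    rcases (hg0 x hx).eq_or_lt with h | h
    · rw [← h]; simpa using (hqpos x).le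
    · have h8 := Real.log_le_sub_one_of_pos (div_pos (hqpos x) h)
      rw [Real.log_div (hqpos x).ne' h.ne'] at h8
      have h9 := mul_le_mul_of_nonneg_left h8 h.le
      have h10 : g x * (q x / g x - 1) = q x - g x := by field_simp
      rw [h10] at h9
      linarith
  rw [Finset.sum_sub_distrib, Finset.sum_sub_distrib, hqsum, hg1] at h7
  linarith
end

section
/- Let f : ℝ → ℝ be a nonnegative measurable probability density (∫_ℝ f(x) dx = 1) with finite mean μ = ∫_ℝ x f(x) dx and finite variance σ² = ∫_ℝ (x − μ)² f(x) dx, where σ² > 0, and suppose the differential entropy −∫_ℝ f(x) ln f(x) dx is well defined. Then −∫_ℝ f(x) ln f(x) dx ≤ (1/2) ln(2π e σ²), with equality attained by the Gaussian density with mean μ and variance σ². In other words, when the first two moments (mean and variance) are provided, the maximum entropy reconstruction is given by the normal distribution. -/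
open MeasureTheory Real

lemma gauss_aux (μ v : ℝ) (hv : 0 < v) (g : ℝ → ℝ)
    (hg : ∀ x, g x = (Real.sqrt (2 * π * v))⁻¹ * Real.exp (-(x - μ) ^ 2 / (2 * v))) :
    Integrable g ∧ ∫ x, g x = 1 ∧ Integrable (fun x => (x - μ) ^ 2 * g x) ∧
      ∫ x, (x - μ) ^ 2 * g x = v := by
  lift v to NNReal using hv.le
  have hgg : g = ProbabilityTheory.gaussianPDFReal μ v := by
    funext x
    rw [hg]
    rfl
  have hv0 : v ≠ 0 := by
    intro h
    exact hv.ne' (congrArg NNReal.toReal h)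
  have h2 : ∫ x, (x - μ) ^ 2 * g x = v := by
    have h := ProbabilityTheory.variance_fun_id_gaussianReal (μ := μ) (v := v)
    rw [ProbabilityTheory.variance_eq_integral (by fun_prop)] at h
    rw [ProbabilityTheory.integral_id_gaussianReal,
      ProbabilityTheory.integral_gaussianReal_eq_integral_smul hv0] at h
    rw [hgg]
    simp only [smul_eq_mul] at h
    simp_rw [mul_comm _ (ProbabilityTheory.gaussianPDFReal _ _ _)]
    exact h
  refine ⟨?_, ?_, ?_, h2⟩
  · rw [hgg]
    exact ProbabilityTheory.integrable_gaussianPDFReal _ _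
  · rw [hgg]
    exact ProbabilityTheory.integral_gaussianPDFReal_eq_one _ hv0
  · by_contra hc
    rw [integral_undef hc] at h2
    exact hv.ne h2

/-- Maximum entropy with mean and variance constraints on `ℝ`: any probability
density `f` on `ℝ` with mean `μ`, variance `σ² > 0` and well-defined differential
entropy satisfies `h(f) ≤ (1/2) ln(2πeσ²)`, and the Gaussian density with mean `μ`
and variance `σ²` attains this bound. -/
theorem maxEntropy_gaussian_density
    (f : ℝ → ℝ) (μ v : ℝ) (hv : 0 < v)
    (hf_meas : Measurable f)
    (hf_nonneg : ∀ x : ℝ, 0 ≤ f x)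
    (hf_int : Integrable f)
    (hf_one : ∫ x : ℝ, f x = 1)
    (hmean_int : Integrable (fun x => x * f x))
    (hmean : ∫ x : ℝ, x * f x = μ)
    (hvar_int : Integrable (fun x => (x - μ) ^ 2 * f x))
    (hvar : ∫ x : ℝ, (x - μ) ^ 2 * f x = v)
    (hent_int : Integrable (fun x => f x * Real.log (f x))) :
    (-∫ x : ℝ, f x * Real.log (f x) ≤ (1 / 2) * Real.log (2 * π * Real.exp 1 * v)) ∧
      (-∫ x : ℝ,
          ((Real.sqrt (2 * π * v))⁻¹ * Real.exp (-(x - μ) ^ 2 / (2 * v)))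
            * Real.log ((Real.sqrt (2 * π * v))⁻¹ * Real.exp (-(x - μ) ^ 2 / (2 * v)))
        = (1 / 2) * Real.log (2 * π * Real.exp 1 * v)) := by
  set g : ℝ → ℝ := fun x => (Real.sqrt (2 * π * v))⁻¹ * Real.exp (-(x - μ) ^ 2 / (2 * v)) with hgdef
  obtain ⟨g1, g2, g3, g4⟩ := gauss_aux μ v hv g (fun _ => rfl)
  have hpv : 0 < 2 * π * v := by positivity
  have hgpos : ∀ x, 0 < g x := fun x => by
    have := Real.sqrt_pos.2 hpv
    simp only [hgdef]
    positivity
  have hlog : ∀ x, Real.log (g x) = -(1 / 2) * Real.log (2 * π * v) - (2 * v)⁻¹ * (x - μ) ^ 2 := by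
    intro x
    have := Real.sqrt_pos.2 hpv
    simp only [hgdef]
    rw [Real.log_mul (by positivity) (by positivity), Real.log_inv, Real.log_exp,
      Real.log_sqrt hpv.le]
    field_simp
    ring
  have hR : (1 / 2) * Real.log (2 * π * Real.exp 1 * v)
      = 1 / 2 * Real.log (2 * π * v) + 1 / 2 := by
    rw [show 2 * π * Real.exp 1 * v = (2 * π * v) * Real.exp 1 by ring,
      Real.log_mul hpv.ne' (by positivity), Real.log_exp]
    ring
  have key : ∀ p : ℝ → ℝ, Integrable p → ∫ x, p x = 1 →
      Integrable (fun x => (x - μ) ^ 2 * p x) → ∫ x, (x - μ) ^ 2 * p x = v →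
      Integrable (fun x => p x * Real.log (g x)) ∧
      ∫ x, p x * Real.log (g x) = -((1 / 2) * Real.log (2 * π * Real.exp 1 * v)) := by
    intro p p1 p2 p3 p4
    have e : (fun x => p x * Real.log (g x)) = fun x =>
        -(1 / 2) * Real.log (2 * π * v) * p x - (2 * v)⁻¹ * ((x - μ) ^ 2 * p x) := by
      funext x
      rw [hlog]
      ring
    rw [e]
    refine ⟨(p1.const_mul _).sub (p3.const_mul _), ?_⟩
    rw [integral_sub (p1.const_mul _) (p3.const_mul _), integral_const_mul, integral_const_mul,
      p2, p4, hR]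
    field_simp
    ring
  refine ⟨?_, ?_⟩
  · obtain ⟨k1, k2⟩ := key f hf_int hf_one hvar_int hvar
    have hm : ∫ x, (f x * Real.log (g x) + (f x - g x)) ≤ ∫ x, f x * Real.log (f x) := by
      refine integral_mono (k1.add (hf_int.sub g1)) hent_int fun x => ?_
      have hgx := hgpos x
      show f x * Real.log (g x) + (f x - g x) ≤ f x * Real.log (f x)
      rcases (hf_nonneg x).eq_or_lt with h0 | h0
      · rw [← h0]
        linarith
      · have h := Real.log_le_sub_one_of_pos (div_pos hgx h0)
        rw [Real.log_div hgx.ne' h0.ne'] at h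
        have h' := mul_le_mul_of_nonneg_left h h0.le
        have e : f x * (g x / f x - 1) = g x - f x := by field_simp
        rw [e] at h'
        linarith
    have k3 : Integrable (fun x => f x - g x) := hf_int.sub g1
    rw [integral_add k1 k3, integral_sub hf_int g1, k2, hf_one, g2] at hm
    linarith
  · have := (key g g1 g2 g3 g4).2
    show -∫ x, g x * Real.log (g x) = _
    rw [this, neg_neg]
end
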